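/- arXiv:0807.1333 — 2 statements merged into one kernel-verified Lean document; each statement's English description precedes it below -/
import Mathlib

section
/- For all r ∈ [0,1] and all α ∈ [0, 1/√2], t(r,α) ≥ min(1/2, h((1+r)/2)). -/
/-- The base-2 binary entropy function `h(p) = -p·log₂ p - (1-p)·log₂(1-p)`. -/
noncomputable def binEnt (p : ℝ) : ℝ := -(p * Real.logb 2 p) - (1 - p) * Real.logb 2 (1 - p)

/-- `g(r,α) = h((1+r)/2 - 2α²r)`. -/
noncomputable def gFun (r α : ℝ) : ℝ := binEnt ((1 + r) / 2 - 2 * α ^ 2 * r)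

/-- `t(r,α) = (1 + g(1,α))/2 + h((1+r)/2) - g(r,α)`. -/
noncomputable def tFun (r α : ℝ) : ℝ :=
  (1 + gFun 1 α) / 2 + binEnt ((1 + r) / 2) - gFun r α

/-!
Put `s = 1 - 4α²`, so that `(1 + r)/2 - 2α²r = (1 + rs)/2`, and let `C x = 1 - h((1 + x)/2)`. Then
`t(r,α) = 1 - C s / 2 - C r + C (rs)`. The function `C` is supermultiplicative on `[-1, 1]`: it is
a power series in `x²` with nonnegative coefficients of total mass `C 1 = 1`, i.e. `C x = 𝔼[x ^ N]`
for a random even number `N`, and `r ^ N`, `s ^ N` are both decreasing in `N`, so Chebyshev's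
correlation inequality gives `C r * C s ≤ C (rs)`. Hence
`t(r,α) ≥ C s * (1/2) + (1 - C s) * h((1 + r)/2)`, a convex combination of the two quantities in
the minimum.
-/

section Chebyshev

variable {ι R : Type*} [CommRing R] [LinearOrder R] [IsStrictOrderedRing R] [TopologicalSpace R]
  [IsTopologicalRing R] [OrderClosedTopology R]

-- Summing `w j * w i * ((f i - f j) * (g i - g j)) ≥ 0` over `i`, then over `j`,
-- avoids double series.
theorem mul_le_mul_of_monovary_of_hasSum {w f g : ι → R} {W F G P : R} (hw : ∀ i, 0 ≤ w i)
    (hfg : Monovary f g) (hW : HasSum w W) (hF : HasSum (fun i ↦ w i * f i) F)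
    (hG : HasSum (fun i ↦ w i * g i) G) (hP : HasSum (fun i ↦ w i * (f i * g i)) P) :
    F * G ≤ W * P := by
  have inner_nonneg (j : ι) : 0 ≤ P - F * g j - f j * G + W * (f j * g j) := by
    have hsum := ((hP.sub (hF.mul_right (g j))).sub (hG.mul_left (f j))).add
      (hW.mul_right (f j * g j))
    refine hsum.nonneg fun i ↦ ?_
    convert mul_nonneg (hw i) (hfg.sub_mul_sub_nonneg j i) using 1
    ring
  have hsum := (((hW.mul_right P).sub (hG.mul_left F)).sub (hF.mul_right G)).add (hP.mul_left W)
  have outer_nonneg := hsum.nonneg fun j ↦ by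
    convert mul_nonneg (hw j) (inner_nonneg j) using 1
    ring
  linarith

end Chebyshev

theorem antitone_pow_two_mul_add_two {R : Type*} [CommRing R] [LinearOrder R]
    [IsStrictOrderedRing R] {x : R} (hx : |x| ≤ 1) :
    Antitone fun k : ℕ ↦ x ^ (2 * k + 2) := by
  have hx_sq : x ^ 2 ≤ 1 := (sq_le_one_iff_abs_le_one x).mpr hx
  intro k l hkl
  simpa only [← pow_mul, mul_add_one] using
    pow_le_pow_of_le_one (sq_nonneg x) hx_sq (Nat.add_le_add_right hkl 1)

theorem binEnt_eq_binEntropy_div_log_two (p : ℝ) : binEnt p = Real.binEntropy p / Real.log 2 := by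
  rw [Real.binEntropy_eq_negMulLog_add_negMulLog_one_sub, binEnt, Real.negMulLog, Real.negMulLog,
    Real.logb, Real.logb]
  ring

/-- The capacity, in bits, of the binary symmetric channel whose input and output signs have
correlation `x`, i.e. with crossover probability `(1 - x) / 2`. Parametrized in this way, the
cascade of two channels corresponds to the product of their parameters. -/
noncomputable def bscCapacity (x : ℝ) : ℝ := 1 - binEnt ((1 + x) / 2)

theorem bscCapacity_mul_log_two (x : ℝ) :
    bscCapacity x * Real.log 2 = Real.log 2 - Real.binEntropy ((1 + x) / 2) := by
  rw [bscCapacity, binEnt_eq_binEntropy_div_log_two, sub_mul, one_mul,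
    div_mul_cancel₀ _ (Real.log_pos one_lt_two).ne']

@[fun_prop]
theorem continuous_bscCapacity : Continuous bscCapacity := by
  unfold bscCapacity
  simp only [binEnt_eq_binEntropy_div_log_two]
  fun_prop

theorem bscCapacity_nonneg (x : ℝ) : 0 ≤ bscCapacity x := by
  refine nonneg_of_mul_nonneg_left ?_ (Real.log_pos one_lt_two)
  rw [bscCapacity_mul_log_two]
  exact sub_nonneg.mpr Real.binEntropy_le_log_two

theorem bscCapacity_le_one {x : ℝ} (hx : |x| ≤ 1) : bscCapacity x ≤ 1 := by
  obtain ⟨hx_ge, hx_le⟩ := abs_le.mp hx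
  rw [bscCapacity, binEnt_eq_binEntropy_div_log_two, sub_le_self_iff]
  exact div_nonneg (Real.binEntropy_nonneg (by linarith) (by linarith))
    (Real.log_nonneg one_le_two)

theorem bscCapacity_one : bscCapacity 1 = 1 := by
  simp [bscCapacity, binEnt]

theorem bscCapacity_mul_log_two_eq_log {x : ℝ} (hx : |x| < 1) :
    bscCapacity x * Real.log 2 =
      (x * (Real.log (1 + x) - Real.log (1 - x)) + Real.log (1 - x ^ 2)) / 2 := by
  obtain ⟨hx_gt, hx_lt⟩ := abs_lt.mp hx
  have hx_add : 1 + x ≠ 0 := by linarith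
  have hx_sub : 1 - x ≠ 0 := by linarith
  rw [bscCapacity_mul_log_two, Real.binEntropy_eq_negMulLog_add_negMulLog_one_sub,
    Real.negMulLog, Real.negMulLog, show 1 - (1 + x) / 2 = (1 - x) / 2 by ring,
    Real.log_div hx_add two_ne_zero, Real.log_div hx_sub two_ne_zero,
    show 1 - x ^ 2 = (1 + x) * (1 - x) by ring, Real.log_mul hx_add hx_sub]
  ring

theorem hasSum_bscCapacity_mul_log_two {x : ℝ} (hx : |x| < 1) :
    HasSum (fun k : ℕ ↦ x ^ (2 * k + 2) / ((2 * k + 1) * (2 * k + 2)))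
      (bscCapacity x * Real.log 2) := by
  have hx_sq : |x ^ 2| < 1 := by
    rw [abs_pow]
    exact pow_lt_one₀ (abs_nonneg x) hx two_ne_zero
  have log_series := (((Real.hasSum_log_sub_log_of_abs_lt_one hx).mul_left x).sub
    (Real.hasSum_pow_div_log_of_abs_lt_one hx_sq)).div_const 2
  rw [sub_neg_eq_add, ← bscCapacity_mul_log_two_eq_log hx] at log_series
  refine log_series.congr_fun fun k ↦ ?_
  rw [← pow_mul, mul_add_one]
  field_simp
  ring

-- The factor `u` keeps all arguments inside the open disc where the power series is available.
theorem bscCapacity_mul_mul_bscCapacity_mul_le {r s u : ℝ} (hr : |r| ≤ 1) (hs : |s| ≤ 1)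
    (hu : |u| < 1) :
    bscCapacity (u * r) * bscCapacity (u * s) ≤ bscCapacity u * bscCapacity (u * (r * s)) := by
  have hasSum_mul {x : ℝ} (hx : |x| ≤ 1) :
      HasSum (fun k : ℕ ↦ u ^ (2 * k + 2) / ((2 * k + 1) * (2 * k + 2)) * x ^ (2 * k + 2))
        (bscCapacity (u * x) * Real.log 2) := by
    have hux : |u * x| < 1 := by
      rw [abs_mul]
      exact (mul_le_of_le_one_right (abs_nonneg u) hx).trans_lt hu
    simpa only [mul_pow, div_mul_eq_mul_div] using hasSum_bscCapacity_mul_log_two hux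
  have hrs : |r * s| ≤ 1 := by
    rw [abs_mul]
    exact mul_le_one₀ hr (abs_nonneg s) hs
  have weight_nonneg (k : ℕ) : 0 ≤ u ^ (2 * k + 2) / ((2 * k + 1) * (2 * k + 2)) :=
    div_nonneg ((even_two_mul k).add even_two |>.pow_nonneg u) (by positivity)
  have chebyshev := mul_le_mul_of_monovary_of_hasSum weight_nonneg
    ((antitone_pow_two_mul_add_two hr).monovary (antitone_pow_two_mul_add_two hs))
    (hasSum_bscCapacity_mul_log_two hu) (hasSum_mul hr) (hasSum_mul hs)
    ((hasSum_mul hrs).congr_fun fun k ↦ by rw [mul_pow])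
  rw [mul_mul_mul_comm, mul_mul_mul_comm (bscCapacity u)] at chebyshev
  exact le_of_mul_le_mul_right chebyshev (by positivity)

theorem bscCapacity_mul_bscCapacity_le {r s : ℝ} (hr : |r| ≤ 1) (hs : |s| ≤ 1) :
    bscCapacity r * bscCapacity s ≤ bscCapacity (r * s) := by
  have h_one_mem : (1 : ℝ) ∈ closure (Set.Ioo (-1) 1) := by
    rw [closure_Ioo (by norm_num)]
    exact Set.right_mem_Icc.mpr (by norm_num)
  have hle := le_on_closure
    (fun u hu ↦ bscCapacity_mul_mul_bscCapacity_mul_le hr hs (abs_lt.mpr hu))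
    (by fun_prop) (by fun_prop) h_one_mem
  simpa only [one_mul, bscCapacity_one] using hle

theorem tFun_eq_bscCapacity (r α : ℝ) :
    tFun r α = 1 - bscCapacity (1 - 4 * α ^ 2) / 2 - bscCapacity r
      + bscCapacity (r * (1 - 4 * α ^ 2)) := by
  unfold tFun gFun bscCapacity
  ring_nf

theorem abs_one_sub_four_mul_sq_le_one {α : ℝ} (hα : |α| ≤ 1 / √2) : |1 - 4 * α ^ 2| ≤ 1 := by
  have hα_sq : α ^ 2 ≤ 1 / 2 := by
    simpa [div_pow] using sq_le_sq' (neg_le_of_abs_le hα) (le_of_abs_le hα)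
  exact abs_le.mpr ⟨by linarith, by linarith [sq_nonneg α]⟩

theorem convexCombo_le_tFun {r α : ℝ} (hr : |r| ≤ 1) (hα : |1 - 4 * α ^ 2| ≤ 1) :
    bscCapacity (1 - 4 * α ^ 2) * (1 / 2)
      + (1 - bscCapacity (1 - 4 * α ^ 2)) * binEnt ((1 + r) / 2) ≤ tFun r α := by
  have hmul := bscCapacity_mul_bscCapacity_le hr hα
  have hr_eq : binEnt ((1 + r) / 2) = 1 - bscCapacity r := (sub_sub_cancel _ _).symm
  rw [tFun_eq_bscCapacity, hr_eq]
  linarith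

theorem stmt_1_general {r α : ℝ} (hr : |r| ≤ 1) (hα : |α| ≤ 1 / √2) :
    min (1 / 2) (binEnt ((1 + r) / 2)) ≤ tFun r α := by
  have hs := abs_one_sub_four_mul_sq_le_one hα
  exact (Convex.min_le_combo _ _ (bscCapacity_nonneg _) (sub_nonneg.mpr (bscCapacity_le_one hs))
    (add_sub_cancel _ _)).trans (convexCombo_le_tFun hr hs)

/-- For all `r ∈ [0,1]` and all `α ∈ [0, 1/√2]`,
`t(r,α) ≥ min(1/2, h((1+r)/2))`. -/
theorem stmt_1 (r : ℝ) (hr : r ∈ Set.Icc (0 : ℝ) 1)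
    (α : ℝ) (hα : α ∈ Set.Icc (0 : ℝ) (1 / Real.sqrt 2)) :
    tFun r α ≥ min (1 / 2) (binEnt ((1 + r) / 2)) :=
  stmt_1_general (abs_le.mpr ⟨neg_one_lt_zero.le.trans hr.1, hr.2⟩)
    ((abs_of_nonneg hα.1).trans_le hα.2)
end

section
/- Let 𝒳₀ and 𝒳₁ be finite nonempty types, let d₀, d₁ be positive natural numbers, and let σ₀ : 𝒳₀ → M_{d₀}(ℂ) and σ₁ : 𝒳₁ → M_{d₁}(ℂ) be families of positive semidefinite matrices. Define the product family σ : 𝒳₀ × 𝒳₁ → M_{d₀·d₁}(ℂ) by σ(x₀,x₁) := σ₀ x₀ ⊗ σ₁ x₁ (Kronecker product). Then P_guess(σ) = P_guess(σ₀) · P_guess(σ₁). -/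
open Matrix Kronecker ComplexOrder

/-- A POVM on `ℂᵈ` indexed by a finite type `K`: a family of positive
semidefinite matrices summing to the identity. -/
def IsPOVM {K n : Type*} [Fintype K] [Fintype n] [DecidableEq n]
    (M : K → Matrix n n ℂ) : Prop :=
  (∀ k, (M k).PosSemidef) ∧ ∑ k, M k = 1

/-- The optimal guessing probability of a (subnormalized) cq-state encoded by
the family `σ` of positive semidefinite matrices. -/
noncomputable def Pguess {K n : Type*} [Fintype K] [Fintype n] [DecidableEq n]
    (σ : K → Matrix n n ℂ) : ℝ :=
  sSup {s : ℝ | ∃ M : K → Matrix n n ℂ, IsPOVM M ∧ s = ∑ k, ((M k * σ k).trace).re}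

/-!
The guessing probability is the value of a semidefinite program whose dual minimises `Tr Y` subject
to `σ k ≤ Y` for all `k`. For positive semidefinite families, Kronecker products of feasible points
are feasible in both programs and the objective values multiply, so once both programs attain the
same optimum, multiplicativity follows from weak duality.

For strong duality, take an optimal POVM `M` (the POVMs form a compact set) and let `Y` be the
Hermitian part of `∑ j, M j * σ j`, whose trace has the value of `M` as real part. It is feasible by
a first-order variation: given `P ≥ 0` and an outcome `k`, apply the filter `1 - ε P` before
measuring `M`, and guess `k` when the filter rejects. This changes the success probability by
`2 ε Re Tr (P (σ k - Y)) + O(ε²)`, which cannot be positive, so `Re Tr (P (Y - σ k)) ≥ 0`; and the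
positive semidefinite cone is self-dual.
-/

section

open scoped MatrixOrder ComplexStarModule Topology
open Filter (Tendsto)

section Trace

variable {m n 𝕜 : Type*} [Fintype m] [Fintype n] [RCLike 𝕜]

lemma trace_reindex_self {R : Type*} [AddCommMonoid R] (e : m ≃ n) (A : Matrix m m R) :
    (reindex e e A).trace = A.trace :=
  e.symm.sum_comp fun i => A i i

lemma trace_mul_nonneg {A B : Matrix n n 𝕜} (hA : 0 ≤ A) (hB : 0 ≤ B) : 0 ≤ (A * B).trace := by
  classical
  obtain ⟨C, rfl⟩ := CStarAlgebra.nonneg_iff_eq_star_mul_self.mp hB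
  rw [← mul_assoc, trace_mul_comm, ← mul_assoc]
  exact (hA.posSemidef.mul_mul_conjTranspose_same C).trace_nonneg

lemma re_trace_kronecker_of_nonneg {A : Matrix m m ℂ} (hA : 0 ≤ A.trace) (B : Matrix n n ℂ) :
    (A ⊗ₖ B).trace.re = A.trace.re * B.trace.re := by
  rw [trace_kronecker, Complex.mul_re, ← (Complex.nonneg_iff.mp hA).2, zero_mul, sub_zero]

lemma re_trace_conjTranspose (A : Matrix n n ℂ) : Aᴴ.trace.re = A.trace.re := by
  rw [trace_conjTranspose, Complex.star_def, Complex.conj_re]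

lemma re_trace_mul_realPart {P : Matrix n n ℂ} (hP : P.IsHermitian) (A : Matrix n n ℂ) :
    (P * (ℜ A : Matrix n n ℂ)).trace.re = (P * A).trace.re := by
  have hstar : (P * Aᴴ).trace.re = (P * A).trace.re := by
    rw [← re_trace_conjTranspose, conjTranspose_mul, conjTranspose_conjTranspose, hP.eq,
      trace_mul_comm]
  rw [realPart_apply_coe, star_eq_conjTranspose, mul_smul_comm, mul_add, trace_smul, trace_add,
    Complex.smul_re, Complex.add_re, hstar, smul_eq_mul]
  ring

lemma nonneg_of_forall_re_trace_mul_nonneg {A : Matrix n n ℂ} (hA : A.IsHermitian)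
    (h : ∀ P : Matrix n n ℂ, 0 ≤ P → 0 ≤ (P * A).trace.re) : 0 ≤ A := by
  refine (PosSemidef.of_dotProduct_mulVec_nonneg hA fun v => ?_).nonneg
  have htrace : star v ⬝ᵥ (A *ᵥ v) = (vecMulVec v (star v) * A).trace := by
    rw [trace_mul_comm, mul_vecMulVec, trace_vecMulVec, dotProduct_comm]
  have him : (star v ⬝ᵥ (A *ᵥ v)).im = 0 := hA.im_star_dotProduct_mulVec_self v
  refine Complex.nonneg_iff.mpr ⟨?_, him.symm⟩
  rw [htrace]
  exact h _ (posSemidef_vecMulVec_self_star v).nonneg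

end Trace

lemma sum_kronecker_sum {K L l m n p R : Type*} [Fintype K] [Fintype L]
    [NonUnitalNonAssocSemiring R] (A : K → Matrix l m R) (B : L → Matrix n p R) :
    (∑ k, A k) ⊗ₖ (∑ j, B j) = ∑ q : K × L, A q.1 ⊗ₖ B q.2 := by
  ext i j
  simp only [kroneckerMap_apply, Matrix.sum_apply, Finset.sum_mul_sum, Fintype.sum_prod_type]

lemma kronecker_le_kronecker {m n 𝕜 : Type*} [Finite m] [Finite n] [RCLike 𝕜]
    {A A' : Matrix m m 𝕜} {B B' : Matrix n n 𝕜} (hA : A ≤ A') (hB : B ≤ B') (hB₀ : 0 ≤ B)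
    (hA₀ : 0 ≤ A') : A ⊗ₖ B ≤ A' ⊗ₖ B' := by
  have hsplit : A' ⊗ₖ B' - A ⊗ₖ B = A' ⊗ₖ (B' - B) + (A' - A) ⊗ₖ B := by
    ext i j
    simp only [Matrix.sub_apply, Matrix.add_apply, kroneckerMap_apply]
    ring
  rw [Matrix.le_iff, hsplit]
  exact (hA₀.posSemidef.kronecker hB).add (PosSemidef.kronecker hA hB₀.posSemidef)

open scoped Matrix.Norms.L2Operator in
lemma eventually_one_sub_smul_mul_self_le_one {n : Type*} [Fintype n] [DecidableEq n]
    {P : Matrix n n ℂ} (hP : 0 ≤ P) :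
    ∀ᶠ ε : ℝ in 𝓝[>] 0, (1 - ε • P) * (1 - ε • P) ≤ 1 := by
  have hsmall : ∀ᶠ ε : ℝ in 𝓝[>] 0, ‖ε • P‖ ≤ 1 := by
    have hcont : Continuous fun ε : ℝ => ‖ε • P‖ := by fun_prop
    have hlim : Tendsto (fun ε : ℝ => ‖ε • P‖) (𝓝[>] 0) (𝓝 0) :=
      (hcont.tendsto' 0 0 (by simp)).mono_left nhdsWithin_le_nhds
    exact hlim.eventually_le_const one_pos
  filter_upwards [hsmall, self_mem_nhdsWithin] with ε hε hε₀
  have hεP : 0 ≤ ε • P := smul_nonneg (Set.mem_Ioi.mp hε₀).le hP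
  have hεP' : ε • P ≤ 1 := (CStarAlgebra.norm_le_one_iff_of_nonneg _ hεP).mp hε
  have := CStarAlgebra.pow_antitone (sub_nonneg.mpr hεP') (sub_le_self 1 hεP) zero_le_two
  simpa only [pow_zero, sq] using this

lemma nonpos_of_eventually_mul_add_sq_mul_nonpos {a b : ℝ}
    (h : ∀ᶠ ε : ℝ in 𝓝[>] 0, ε * a + ε ^ 2 * b ≤ 0) : a ≤ 0 := by
  have hcont : Continuous fun ε : ℝ => a + ε * b := by fun_prop
  have hlim : Tendsto (fun ε : ℝ => a + ε * b) (𝓝[>] 0) (𝓝 a) :=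
    (hcont.tendsto' 0 a (by simp)).mono_left nhdsWithin_le_nhds
  refine le_of_tendsto hlim ?_
  filter_upwards [h, self_mem_nhdsWithin] with ε hε hε₀
  refine nonpos_of_mul_nonpos_right (a := ε) ?_ hε₀
  linarith

section POVM

variable {K n : Type*} [Fintype K] [Fintype n] [DecidableEq n]

lemma exists_isPOVM [Nonempty K] : ∃ M : K → Matrix n n ℂ, IsPOVM M := by
  classical
  obtain ⟨k⟩ := ‹Nonempty K›
  refine ⟨Pi.single k 1, fun j => ?_, ?_⟩
  · have hsingle : (0 : K → Matrix n n ℂ) ≤ Pi.single k 1 :=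
      Pi.single_nonneg.mpr PosSemidef.one.nonneg
    exact (hsingle j).posSemidef
  · simp only [Finset.sum_pi_single', Finset.mem_univ, if_true]

lemma IsPOVM.le_one {M : K → Matrix n n ℂ} (hM : IsPOVM M) (k : K) : M k ≤ 1 :=
  hM.2 ▸ Finset.single_le_sum (fun j _ => (hM.1 j).nonneg) (Finset.mem_univ k)

open scoped Matrix.Norms.L2Operator in
lemma isCompact_setOf_isPOVM : IsCompact {M : K → Matrix n n ℂ | IsPOVM M} := by
  have : ProperSpace (K → Matrix n n ℂ) := FiniteDimensional.proper ℂ _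
  refine Metric.isCompact_of_isClosed_isBounded ?_ ?_
  · have hset : {M : K → Matrix n n ℂ | IsPOVM M} = {M | 0 ≤ M} ∩ {M | ∑ k, M k = 1} := by
      ext M
      simp only [IsPOVM, ← Matrix.nonneg_iff_posSemidef]
      rfl
    rw [hset]
    exact (isClosed_le continuous_const continuous_id).inter
      (isClosed_eq (by fun_prop) continuous_const)
  · refine (Metric.isBounded_closedBall (x := 0) (r := 1)).subset fun M hM => ?_
    rw [mem_closedBall_zero_iff, pi_norm_le_iff_of_nonneg zero_le_one]
    exact fun k => (CStarAlgebra.norm_le_one_iff_of_nonneg _ (hM.1 k).nonneg).mpr (hM.le_one k)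

lemma IsPOVM.conj_add_single [DecidableEq K] {M : K → Matrix n n ℂ} (hM : IsPOVM M)
    {A : Matrix n n ℂ} (hA : Aᴴ * A ≤ 1) (k : K) :
    IsPOVM ((fun j => Aᴴ * M j * A) + Pi.single k (1 - Aᴴ * A)) := by
  constructor
  · have hsingle : 0 ≤ (Pi.single k (1 - Aᴴ * A) : K → Matrix n n ℂ) :=
      Pi.single_nonneg.mpr (sub_nonneg.mpr hA)
    exact fun j => ((hM.1 j).conjTranspose_mul_mul_same A).add (hsingle j).posSemidef
  · simp only [Pi.add_apply, Finset.sum_add_distrib, ← Finset.sum_mul, ← Finset.mul_sum, hM.2,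
      mul_one, Finset.sum_pi_single', Finset.mem_univ, if_true, add_sub_cancel]

lemma IsPOVM.kronecker {L m : Type*} [Fintype L] [Fintype m] [DecidableEq m]
    {M : K → Matrix n n ℂ} {N : L → Matrix m m ℂ} (hM : IsPOVM M) (hN : IsPOVM N) :
    IsPOVM fun p : K × L => M p.1 ⊗ₖ N p.2 := by
  refine ⟨fun p => (hM.1 p.1).kronecker (hN.1 p.2), ?_⟩
  rw [← sum_kronecker_sum, hM.2, hN.2, one_kronecker_one]

lemma isPOVM_reindex_iff {m : Type*} [Fintype m] [DecidableEq m] (e : n ≃ m)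
    {M : K → Matrix n n ℂ} : IsPOVM (fun k => reindex e e (M k)) ↔ IsPOVM M := by
  have hsum : ∑ k, reindex e e (M k) = reindex e e (∑ k, M k) :=
    (map_sum (reindexLinearEquiv ℂ ℂ e e) M Finset.univ).symm
  have hone : reindex e e (1 : Matrix n n ℂ) = 1 := submatrix_one_equiv e.symm
  simp only [IsPOVM, hsum]
  rw [← hone, (reindex e e).injective.eq_iff]
  simp only [reindex_apply, posSemidef_submatrix_equiv]

end POVM

section SuccessProb

variable {K n : Type*} [Fintype K] [Fintype n]

/-- The probability of guessing the classical part of the cq-state `σ` correctly from the outcome of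
the measurement `M`. It is defined for arbitrary families `M`, so that it is additive in `M`. -/
noncomputable def successProb (M σ : K → Matrix n n ℂ) : ℝ :=
  ∑ k, (M k * σ k).trace.re

lemma successProb_add (M N σ : K → Matrix n n ℂ) :
    successProb (M + N) σ = successProb M σ + successProb N σ := by
  simp only [successProb, Pi.add_apply, add_mul, trace_add, Complex.add_re, Finset.sum_add_distrib]

lemma successProb_single [DecidableEq K] (k : K) (A : Matrix n n ℂ) (σ : K → Matrix n n ℂ) :
    successProb (Pi.single k A) σ = (A * σ k).trace.re := by
  rw [successProb, Finset.sum_eq_single k, Pi.single_eq_same]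
  · intro j _ hj
    rw [Pi.single_eq_of_ne hj, zero_mul, trace_zero, Complex.zero_re]
  · exact fun hk => absurd (Finset.mem_univ k) hk

lemma successProb_reindex {m : Type*} [Fintype m] (e : n ≃ m) (M σ : K → Matrix n n ℂ) :
    successProb (fun k => reindex e e (M k)) (fun k => reindex e e (σ k)) = successProb M σ := by
  simp only [successProb, reindex_apply, submatrix_mul_equiv]
  simp only [← reindex_apply, trace_reindex_self]

lemma successProb_kronecker {L m : Type*} [Fintype L] [Fintype m] {M σ : K → Matrix n n ℂ}
    (hM : ∀ k, 0 ≤ M k) (hσ : ∀ k, 0 ≤ σ k) (N τ : L → Matrix m m ℂ) :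
    successProb (fun p : K × L => M p.1 ⊗ₖ N p.2) (fun p => σ p.1 ⊗ₖ τ p.2)
      = successProb M σ * successProb N τ := by
  simp only [successProb, Finset.sum_mul_sum, ← mul_kronecker_mul, Fintype.sum_prod_type,
    re_trace_kronecker_of_nonneg (trace_mul_nonneg (hM _) (hσ _))]

variable [DecidableEq n]

lemma exists_isPOVM_isMaxOn_successProb [Nonempty K] (σ : K → Matrix n n ℂ) :
    ∃ M, IsPOVM M ∧ IsMaxOn (successProb · σ) {M | IsPOVM M} M := by
  refine isCompact_setOf_isPOVM.exists_isMaxOn exists_isPOVM (Continuous.continuousOn ?_)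
  unfold successProb
  fun_prop

end SuccessProb

section Duality

variable {K n : Type*} [Fintype K] [Fintype n]

/-- The candidate dual solution belonging to the measurement `M`: the Hermitian part of
`∑ k, M k * σ k`. -/
noncomputable def dualOperator (M σ : K → Matrix n n ℂ) : Matrix n n ℂ :=
  (ℜ (∑ k, M k * σ k) : selfAdjoint (Matrix n n ℂ))

lemma isHermitian_dualOperator (M σ : K → Matrix n n ℂ) : (dualOperator M σ).IsHermitian :=
  (ℜ (∑ k, M k * σ k)).2

lemma re_trace_mul_dualOperator {P : Matrix n n ℂ} (hP : P.IsHermitian) (M σ : K → Matrix n n ℂ) :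
    (P * dualOperator M σ).trace.re = ∑ k, (P * M k * σ k).trace.re := by
  rw [dualOperator, re_trace_mul_realPart hP, Finset.mul_sum, trace_sum, Complex.re_sum]
  simp only [mul_assoc]

lemma re_trace_dualOperator (M σ : K → Matrix n n ℂ) :
    (dualOperator M σ).trace.re = successProb M σ := by
  classical
  simpa only [one_mul, successProb] using re_trace_mul_dualOperator isHermitian_one M σ

variable [DecidableEq n]

lemma IsPOVM.successProb_le_re_trace {M σ : K → Matrix n n ℂ} {Y : Matrix n n ℂ}
    (hM : IsPOVM M) (hY : ∀ k, σ k ≤ Y) : successProb M σ ≤ Y.trace.re :=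
  calc successProb M σ ≤ ∑ k, (M k * Y).trace.re := by
        refine Finset.sum_le_sum fun k _ => ?_
        have := trace_mul_nonneg (hM.1 k).nonneg (sub_nonneg.mpr (hY k))
        rw [mul_sub, trace_sub, sub_nonneg] at this
        exact (Complex.le_def.mp this).1
    _ = Y.trace.re := by rw [← Complex.re_sum, ← trace_sum, ← Finset.sum_mul, hM.2, one_mul]

lemma IsPOVM.pguess_eq_re_trace {M σ : K → Matrix n n ℂ} {Y : Matrix n n ℂ} (hM : IsPOVM M)
    (hY : ∀ k, σ k ≤ Y) (h : successProb M σ = Y.trace.re) : Pguess σ = Y.trace.re := by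
  refine IsGreatest.csSup_eq ⟨⟨M, hM, h.symm⟩, ?_⟩
  rintro _ ⟨N, hN, rfl⟩
  exact hN.successProb_le_re_trace hY

lemma successProb_conj_one_sub_smul {M σ : K → Matrix n n ℂ} {P : Matrix n n ℂ}
    (hM : ∀ k, (M k).IsHermitian) (hσ : ∀ k, (σ k).IsHermitian) (hP : P.IsHermitian) (ε : ℝ) :
    successProb (fun k => (1 - ε • P) * M k * (1 - ε • P)) σ =
      successProb M σ - 2 * ε * (P * dualOperator M σ).trace.re +
        ε ^ 2 * successProb (fun k => P * M k * P) σ := by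
  have hswap (k : K) : (M k * P * σ k).trace.re = (P * M k * σ k).trace.re := by
    rw [← re_trace_conjTranspose, conjTranspose_mul, conjTranspose_mul, (hM k).eq, (hσ k).eq, hP.eq,
      trace_mul_comm]
  have hterm (k : K) : ((1 - ε • P) * M k * (1 - ε • P) * σ k).trace.re =
      (M k * σ k).trace.re - 2 * ε * (P * M k * σ k).trace.re +
        ε ^ 2 * (P * M k * P * σ k).trace.re := by
    simp only [sub_mul, mul_sub, one_mul, mul_one, smul_mul_assoc, mul_smul_comm, trace_sub,
      trace_smul, Complex.sub_re, Complex.smul_re, smul_eq_mul, hswap]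
    ring
  simp only [successProb, hterm, Finset.sum_add_distrib, Finset.sum_sub_distrib, ← Finset.mul_sum,
    re_trace_mul_dualOperator hP]

lemma re_trace_mul_le_of_isMaxOn_successProb {M σ : K → Matrix n n ℂ} (hM : IsPOVM M)
    (hmax : IsMaxOn (successProb · σ) {M | IsPOVM M} M) (hσ : ∀ k, (σ k).IsHermitian)
    {P : Matrix n n ℂ} (hP : 0 ≤ P) (k : K) :
    (P * σ k).trace.re ≤ (P * dualOperator M σ).trace.re := by
  classical
  have hPH : P.IsHermitian := hP.posSemidef.isHermitian
  have hvariation : ∀ᶠ ε : ℝ in 𝓝[>] 0,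
      ε * (2 * ((P * σ k).trace.re - (P * dualOperator M σ).trace.re)) +
        ε ^ 2 * (successProb (fun j => P * M j * P) σ - (P * P * σ k).trace.re) ≤ 0 := by
    filter_upwards [eventually_one_sub_smul_mul_self_le_one hP] with ε hε
    have hA : (1 - ε • P)ᴴ = 1 - ε • P := by
      rw [conjTranspose_sub, conjTranspose_one, conjTranspose_smul, star_trivial, hPH.eq]
    have hreject : ((1 - (1 - ε • P) * (1 - ε • P)) * σ k).trace.re =
        2 * ε * (P * σ k).trace.re - ε ^ 2 * (P * P * σ k).trace.re := by
      simp only [sub_mul, mul_sub, one_mul, mul_one, smul_mul_assoc, mul_smul_comm, trace_sub,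
        trace_smul, Complex.sub_re, Complex.smul_re, smul_eq_mul]
      ring
    have hle : successProb _ σ ≤ successProb M σ :=
      hmax (hM.conj_add_single (A := 1 - ε • P) (by rwa [hA]) k)
    rw [hA, successProb_add, successProb_single, hreject,
      successProb_conj_one_sub_smul (fun j => (hM.1 j).isHermitian) hσ hPH] at hle
    linarith
  linarith [nonpos_of_eventually_mul_add_sq_mul_nonpos hvariation]

theorem le_dualOperator_of_isMaxOn_successProb {M σ : K → Matrix n n ℂ} (hM : IsPOVM M)
    (hmax : IsMaxOn (successProb · σ) {M | IsPOVM M} M) (hσ : ∀ k, (σ k).IsHermitian) (k : K) :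
    σ k ≤ dualOperator M σ := by
  refine sub_nonneg.mp (nonneg_of_forall_re_trace_mul_nonneg
    ((isHermitian_dualOperator M σ).sub (hσ k)) fun P hP => ?_)
  rw [mul_sub, trace_sub, Complex.sub_re, sub_nonneg]
  exact re_trace_mul_le_of_isMaxOn_successProb hM hmax hσ hP k

theorem exists_isPOVM_successProb_eq_re_trace [Nonempty K] {σ : K → Matrix n n ℂ}
    (hσ : ∀ k, (σ k).IsHermitian) :
    ∃ (M : K → Matrix n n ℂ) (Y : Matrix n n ℂ),
      IsPOVM M ∧ (∀ k, σ k ≤ Y) ∧ successProb M σ = Y.trace.re := by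
  obtain ⟨M, hM, hmax⟩ := exists_isPOVM_isMaxOn_successProb σ
  exact ⟨M, dualOperator M σ, hM, le_dualOperator_of_isMaxOn_successProb hM hmax hσ,
    (re_trace_dualOperator M σ).symm⟩

end Duality

lemma pguess_reindex {K m n : Type*} [Fintype K] [Fintype m] [Fintype n] [DecidableEq m]
    [DecidableEq n] (e : n ≃ m) (σ : K → Matrix n n ℂ) :
    Pguess (fun k => reindex e e (σ k)) = Pguess σ := by
  refine congrArg sSup (Set.ext fun s => ?_)
  refine ((Equiv.piCongrRight fun _ : K => reindex e e).surjective.exists).trans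
    (exists_congr fun M => ?_)
  exact and_congr (isPOVM_reindex_iff e) (Iff.of_eq (congrArg (s = ·) (successProb_reindex e M σ)))

theorem stmt_17_general {K L m n : Type*} [Fintype K] [Fintype L] [Nonempty K] [Nonempty L]
    [Fintype m] [Fintype n] [DecidableEq m] [DecidableEq n]
    {σ : K → Matrix m m ℂ} {τ : L → Matrix n n ℂ}
    (hσ : ∀ k, (σ k).PosSemidef) (hτ : ∀ l, (τ l).PosSemidef) :
    Pguess (fun p : K × L => σ p.1 ⊗ₖ τ p.2) = Pguess σ * Pguess τ := by
  obtain ⟨M, Y, hM, hY, hMY⟩ := exists_isPOVM_successProb_eq_re_trace fun k => (hσ k).isHermitian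
  obtain ⟨N, Z, hN, hZ, hNZ⟩ := exists_isPOVM_successProb_eq_re_trace fun l => (hτ l).isHermitian
  have hY₀ : 0 ≤ Y := (hσ (Classical.arbitrary K)).nonneg.trans (hY _)
  have hYZ : (Y ⊗ₖ Z).trace.re = Y.trace.re * Z.trace.re :=
    re_trace_kronecker_of_nonneg hY₀.posSemidef.trace_nonneg Z
  have hfeasible (p : K × L) : σ p.1 ⊗ₖ τ p.2 ≤ Y ⊗ₖ Z :=
    kronecker_le_kronecker (hY p.1) (hZ p.2) (hτ p.2).nonneg hY₀
  have hvalue : successProb (fun p : K × L => M p.1 ⊗ₖ N p.2) (fun p => σ p.1 ⊗ₖ τ p.2) =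
      (Y ⊗ₖ Z).trace.re := by
    rw [successProb_kronecker (fun k => (hM.1 k).nonneg) fun k => (hσ k).nonneg, hMY, hNZ, hYZ]
  rw [(hM.kronecker hN).pguess_eq_re_trace hfeasible hvalue, hYZ,
    hM.pguess_eq_re_trace hY hMY, hN.pguess_eq_re_trace hZ hNZ]

end

/-- Multiplicativity of the guessing probability for independent cq-states:
`P_guess(σ) = P_guess(σ₀)·P_guess(σ₁)` where `σ(x₀,x₁) = σ₀ x₀ ⊗ σ₁ x₁`. -/
theorem stmt_17 (𝒳₀ 𝒳₁ : Type) [Fintype 𝒳₀] [Fintype 𝒳₁] [Nonempty 𝒳₀] [Nonempty 𝒳₁]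
    (d₀ d₁ : ℕ) (hd₀ : 0 < d₀) (hd₁ : 0 < d₁)
    (σ₀ : 𝒳₀ → Matrix (Fin d₀) (Fin d₀) ℂ) (σ₁ : 𝒳₁ → Matrix (Fin d₁) (Fin d₁) ℂ)
    (hσ₀ : ∀ x, (σ₀ x).PosSemidef) (hσ₁ : ∀ x, (σ₁ x).PosSemidef) :
    Pguess (fun p : 𝒳₀ × 𝒳₁ =>
        (Matrix.reindex finProdFinEquiv finProdFinEquiv (σ₀ p.1 ⊗ₖ σ₁ p.2) :
          Matrix (Fin (d₀ * d₁)) (Fin (d₀ * d₁)) ℂ))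
      = Pguess σ₀ * Pguess σ₁ :=
  (pguess_reindex finProdFinEquiv _).trans (stmt_17_general hσ₀ hσ₁)
end
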